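/- Let φ = (1+√5)/2. Consider any instance of the Drones Warehouse Problem with n parcels of distances ℓ_1, …, ℓ_n > 0 and m drones with speeds v_1, …, v_m > 0 and battery lives d_1, …, d_m > 0, such that some drone can deliver every parcel (equivalently, max_i d_i ≥ max_j ℓ_j). Then the LPT heuristic produces a valid schedule whose makespan is at most φ times the minimum makespan over all valid schedules. -/

import Mathlib

/-!
STATEMENT 0: The LPT heuristic for the Drones Warehouse Problem is a
φ-approximation, where φ = (1+√5)/2 is the golden ratio.

A DWP instance has `n` parcels with positive distances `ℓ j`, and `m` drones
with positive speeds `v i` and positive battery lives `d i`.  A schedule is a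
function `g : Fin n → Fin m` assigning each parcel to a drone (this encodes a
partition of the parcels among the drones); it is valid if `ℓ j ≤ d (g j)` for
all `j`.  The makespan is `max_i (∑_{j : g j = i} ℓ j) / v i`.

The LPT heuristic processes the parcels in non-increasing order of distance
(the parcels are assumed sorted, so in the order `0, 1, …, n-1`) and assigns
each parcel to an eligible drone (one whose battery suffices) minimizing the
resulting completion time.  `IsLPT` characterizes exactly the schedules that
can be produced by such a run (for some tie-break).
-/

open Finset

/-- Total distance assigned by `g` to drone `i` among parcels with index `< k`,
i.e. the parcels processed before parcel `k`. -/
def loadBefore {n m : ℕ} (ℓ : Fin n → ℝ) (g : Fin n → Fin m)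
    (k : Fin n) (i : Fin m) : ℝ :=
  ∑ j ∈ Finset.univ.filter (fun j => j < k ∧ g j = i), ℓ j

/-- `g` is a possible run of the LPT heuristic on the DWP instance `(ℓ, v, d)`
(parcels sorted in non-increasing order of distance): each parcel `k` is
assigned to an eligible drone on which it would be completed earliest. -/
def IsLPT {n m : ℕ} (ℓ : Fin n → ℝ) (v d : Fin m → ℝ) (g : Fin n → Fin m) : Prop :=
  ∀ k : Fin n, ℓ k ≤ d (g k) ∧
    ∀ i : Fin m, ℓ k ≤ d i →
      (loadBefore ℓ g k (g k) + ℓ k) / v (g k) ≤ (loadBefore ℓ g k i + ℓ k) / v i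

/-- A schedule is valid if every parcel is assigned to a drone whose battery
life suffices to deliver it. -/
def ValidSchedule {n m : ℕ} (ℓ : Fin n → ℝ) (d : Fin m → ℝ)
    (g : Fin n → Fin m) : Prop :=
  ∀ j, ℓ j ≤ d (g j)

/-- The makespan of a schedule: the maximum over drones of the total assigned
distance divided by the drone's speed. -/
noncomputable def makespan {n m : ℕ} (hm : 0 < m) (ℓ : Fin n → ℝ)
    (v : Fin m → ℝ) (g : Fin n → Fin m) : ℝ :=
  Finset.univ.sup' (Finset.univ_nonempty_iff.mpr ⟨⟨0, hm⟩⟩)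
    (fun i => (∑ j ∈ Finset.univ.filter (fun j => g j = i), ℓ j) / v i)

/-!
Suppose that under LPT parcel `k` completes after time `φ * T`, where `T` bounds all completion
times of some valid schedule. Measure distances in units of `ℓ k` and weigh a distance `x` by
`w x = ⌊x⌋ + ⌊x + (2 - φ)⌋`. Up to time `T`, drone `i` can cover distance `V = T * v i`. Since `w`
is superadditive, the parcels `≤ k` which the valid schedule gives to drone `i` weigh at most `w V`.
Under LPT, every drone eligible for `k` already carries more than `φ * V - 1` in parcels of
distance at least `1`, and any such load weighs at least `w V`. Drones not eligible for `k` carry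
no parcel `≤ k` in the valid schedule. Summing over all drones, the parcels `≤ k` weigh at most as
much as the parcels `< k`, although `k` itself has weight `w 1 = 2`.
-/

section FloorPair

variable {α : Type*} [CommRing α] [LinearOrder α] [FloorRing α]

/-- The weight function `⌊x⌋ + ⌊x + c⌋`: a rounding of `2 * x` to an integer which is superadditive
in `x` as long as `2 * c ≤ 1`. -/
def floorPair (c x : α) : ℤ := ⌊x⌋ + ⌊x + c⌋

variable [IsStrictOrderedRing α] {c : α}

theorem floorPair_mono (c : α) : Monotone (floorPair c) := fun _ _ h =>
  add_le_add (Int.floor_mono h) (Int.floor_mono (add_le_add_left h c))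

theorem floorPair_add_le (hc : 2 * c ≤ 1) (x y : α) :
    floorPair c x + floorPair c y ≤ floorPair c (x + y) := by
  have hxy : ⌊x⌋ + ⌊y⌋ ≤ ⌊x + y⌋ := Int.le_floor_add x y
  have hxcy : ⌊x + c⌋ + ⌊y⌋ ≤ ⌊x + y + c⌋ := by
    simpa only [add_right_comm] using Int.le_floor_add (x + c) y
  have hxyc : ⌊x⌋ + ⌊y + c⌋ ≤ ⌊x + y + c⌋ := by
    simpa only [add_assoc] using Int.le_floor_add x (y + c)
  have hxcyc : ⌊x + c⌋ + ⌊y + c⌋ ≤ ⌊x + y⌋ + 1 := by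
    refine (Int.le_floor_add _ _).trans ?_
    rw [← Int.floor_add_one]
    exact Int.floor_mono (by linarith)
  unfold floorPair
  omega

theorem sum_floorPair_le (hc₀ : 0 ≤ c) (hc : 2 * c ≤ 1) {ι : Type*} (s : Finset ι) (q : ι → α) :
    ∑ j ∈ s, floorPair c (q j) ≤ floorPair c (∑ j ∈ s, q j) := by
  have h_zero : 0 ≤ floorPair c 0 := by simpa [floorPair] using Int.floor_nonneg.2 hc₀
  exact le_sum_of_subadditive (N := ℤᵒᵈ) (floorPair c) h_zero (floorPair_add_le hc) s q

theorem floorPair_le_two_mul (hc : 2 * c ≤ 1) (x : α) : (floorPair c x : α) ≤ 2 * x := by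
  have hx := Int.floor_le x
  have hxc := Int.floor_le (x + c)
  unfold floorPair
  rcases le_or_gt ⌊x + c⌋ ⌊x⌋ with h | h
  · have : (⌊x + c⌋ : α) ≤ ⌊x⌋ := mod_cast h
    push_cast
    linarith
  · have : (⌊x⌋ : α) + 1 ≤ ⌊x + c⌋ := mod_cast h
    push_cast
    linarith

theorem two_mul_lt_floorPair_add (hc₀ : 0 ≤ c) (hc : 2 * c ≤ 1) (x : α) :
    2 * x < floorPair c x + 2 * (1 - c) := by
  have hx := Int.lt_floor_add_one x
  have hxc := Int.lt_floor_add_one (x + c)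
  have hle : ⌊x⌋ ≤ ⌊x + c⌋ := Int.floor_mono (le_add_of_nonneg_right hc₀)
  unfold floorPair
  rcases hle.eq_or_lt with h | h
  · rw [← h] at hxc ⊢
    push_cast
    linarith
  · have : (⌊x⌋ : α) + 1 ≤ ⌊x + c⌋ := mod_cast h
    push_cast
    linarith

end FloorPair

section GoldenWeight

open scoped goldenRatio

/-- The weight function of the LPT analysis, to be applied to distances relative to the distance of
the parcel under consideration. The offset `2 - φ` makes it equal to `2` on `[1, φ)` and to `3` on
`[φ, 2)`. -/
noncomputable abbrev goldenWeight : ℝ → ℤ := floorPair (2 - φ)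

theorem three_halves_lt_goldenRatio : 3 / 2 < φ := by
  nlinarith [Real.goldenRatio_sq, Real.goldenRatio_pos]

theorem two_mul_two_sub_goldenRatio_le_one : 2 * (2 - φ) ≤ 1 := by
  linarith [three_halves_lt_goldenRatio]

theorem two_le_goldenWeight {q : ℝ} (hq : 1 ≤ q) : 2 ≤ goldenWeight q := by
  have h₁ : 1 ≤ ⌊q⌋ := Int.le_floor.2 (mod_cast hq)
  have h₂ : 1 ≤ ⌊q + (2 - φ)⌋ := Int.le_floor.2 (by push_cast; linarith [Real.goldenRatio_lt_two])
  exact add_le_add h₁ h₂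

theorem three_le_goldenWeight {q : ℝ} (hq : φ ≤ q) : 3 ≤ goldenWeight q := by
  have h₁ : 1 ≤ ⌊q⌋ := Int.le_floor.2 (by push_cast; linarith [Real.one_lt_goldenRatio])
  have h₂ : 2 ≤ ⌊q + (2 - φ)⌋ := Int.le_floor.2 (by push_cast; linarith)
  exact add_le_add h₁ h₂

theorem add_le_goldenWeight_of_goldenRatio_le {q : ℝ} (hq : φ ≤ q) :
    2 * (φ - 1) * q + (2 * φ - 3) ≤ goldenWeight q := by
  have hsq := Real.goldenRatio_sq
  have hφ := three_halves_lt_goldenRatio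
  have hφ₂ := Real.goldenRatio_lt_two
  -- At `q = 2 * φ - 1 = √5` the left-hand side equals `3`.
  rcases le_total q (2 * φ - 1) with h | h
  · have : (3 : ℝ) ≤ goldenWeight q := mod_cast three_le_goldenWeight hq
    nlinarith
  · have := two_mul_lt_floorPair_add (sub_nonneg.2 hφ₂.le) two_mul_two_sub_goldenRatio_le_one q
    nlinarith

theorem mul_le_goldenWeight_of_one_le {q : ℝ} (hq : 1 ≤ q) :
    2 * (φ - 1) * q ≤ goldenWeight q := by
  rcases le_total q φ with h | h
  · have : (2 : ℝ) ≤ goldenWeight q := mod_cast two_le_goldenWeight hq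
    nlinarith [Real.goldenRatio_sq, Real.one_lt_goldenRatio]
  · linarith [add_le_goldenWeight_of_goldenRatio_le h, three_halves_lt_goldenRatio]

theorem goldenWeight_le_two_mul_of_lt {x : ℝ} {N : ℤ} (hx : x < N + (φ - 1)) :
    goldenWeight x ≤ 2 * N := by
  have h₁ : ⌊x⌋ < N + 1 := Int.floor_lt.2 (by push_cast; linarith [Real.goldenRatio_lt_two])
  have h₂ : ⌊x + (2 - φ)⌋ < N + 1 := Int.floor_lt.2 (by push_cast; linarith)
  unfold goldenWeight floorPair
  omega

section Sum

variable {ι : Type*} {s : Finset ι} {q : ι → ℝ}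

theorem two_mul_card_le_sum_goldenWeight (hq : ∀ j ∈ s, 1 ≤ q j) :
    2 * (#s : ℤ) ≤ ∑ j ∈ s, goldenWeight (q j) := by
  simpa [mul_comm] using card_nsmul_le_sum s _ 2 fun j hj => two_le_goldenWeight (hq j hj)

theorem add_le_sum_goldenWeight {j : ι} (hj : j ∈ s) (hqj : φ ≤ q j) (hq : ∀ j ∈ s, 1 ≤ q j) :
    2 * (φ - 1) * ∑ j ∈ s, q j + (2 * φ - 3) ≤ ∑ j ∈ s, (goldenWeight (q j) : ℝ) := by
  classical
  have hrest : 2 * (φ - 1) * ∑ x ∈ s.erase j, q x ≤ ∑ x ∈ s.erase j, (goldenWeight (q x) : ℝ) := by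
    rw [mul_sum]
    exact sum_le_sum fun x hx => mul_le_goldenWeight_of_one_le (hq x (mem_of_mem_erase hx))
  rw [← add_sum_erase s q hj, ← add_sum_erase s (fun x => (goldenWeight (q x) : ℝ)) hj]
  linarith [add_le_goldenWeight_of_goldenRatio_le hqj]

theorem goldenWeight_le_sum {V : ℝ} (hq : ∀ j ∈ s, 1 ≤ q j) (hV : φ * V < ∑ j ∈ s, q j + 1) :
    goldenWeight V ≤ ∑ j ∈ s, goldenWeight (q j) := by
  have hsq := Real.goldenRatio_sq
  have hφ := Real.one_lt_goldenRatio
  by_cases hlt : ∀ j ∈ s, q j < φ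
  · have hsum : ∑ j ∈ s, q j ≤ #s * φ := by
      simpa using sum_le_card_nsmul s q φ fun j hj => (hlt j hj).le
    have hcard : V < (#s : ℤ) + (φ - 1) := by
      push_cast
      nlinarith
    exact (goldenWeight_le_two_mul_of_lt hcard).trans (two_mul_card_le_sum_goldenWeight hq)
  · push Not at hlt
    obtain ⟨j, hj, hqj⟩ := hlt
    have hgt : (goldenWeight V : ℝ) < ∑ j ∈ s, (goldenWeight (q j) : ℝ) + 1 :=
      calc (goldenWeight V : ℝ) ≤ 2 * V := floorPair_le_two_mul two_mul_two_sub_goldenRatio_le_one V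
        _ = 2 * (φ - 1) * (φ * V) := by linear_combination -2 * V * hsq
        _ < 2 * (φ - 1) * (∑ j ∈ s, q j + 1) := by gcongr
        _ ≤ ∑ j ∈ s, (goldenWeight (q j) : ℝ) + 1 := by
          linarith [add_le_sum_goldenWeight hj hqj hq]
    exact Int.lt_add_one_iff.1 (mod_cast hgt)

end Sum

end GoldenWeight

theorem exists_greedy_choice {ι β : Type*} [Preorder ι] [WellFoundedLT ι]
    [Nonempty β] {P : ι → (ι → β) → β → Prop}
    (hcongr : ∀ k g g' b, (∀ j < k, g j = g' j) → P k g b → P k g' b)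
    (hex : ∀ k g, ∃ b, P k g b) : ∃ g : ι → β, ∀ k, P k g (g k) := by
  classical
  choose next hnext using hex
  let extend (k : ι) (h : ∀ j < k, β) (j : ι) : β :=
    if hj : j < k then h j hj else Classical.arbitrary β
  let g : ι → β := WellFoundedLT.fix fun k h => next k (extend k h)
  refine ⟨g, fun k => ?_⟩
  have hgk : g k = next k (extend k fun j _ => g j) := WellFoundedLT.fix_eq _ k
  rw [hgk]
  exact hcongr k _ g _ (fun j hj => dif_pos hj) (hnext k _)

section Schedule

open scoped goldenRatio

variable {n m : ℕ} {ℓ : Fin n → ℝ} {v d : Fin m → ℝ} {g g' : Fin n → Fin m} {k : Fin n} {i : Fin m}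
  {T : ℝ}

theorem loadBefore_eq_sum_Iio (ℓ : Fin n → ℝ) (g : Fin n → Fin m) (k : Fin n) (i : Fin m) :
    loadBefore ℓ g k i = ∑ j ∈ Iio k with g j = i, ℓ j := by
  unfold loadBefore
  congr 1
  ext j
  simp

theorem loadBefore_congr (ℓ : Fin n → ℝ) (i : Fin m) (h : ∀ j < k, g j = g' j) :
    loadBefore ℓ g k i = loadBefore ℓ g' k i := by
  simp only [loadBefore_eq_sum_Iio, sum_filter]
  exact sum_congr rfl fun j hj => by rw [h j (mem_Iio.1 hj)]

theorem loadBefore_add_eq_sum (hk : g k = i) (hlast : ∀ j, g j = i → j ≤ k) :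
    loadBefore ℓ g k i + ℓ k = ∑ j with g j = i, ℓ j := by
  have hins : ({j | g j = i} : Finset (Fin n)) = insert k ({j ∈ Iio k | g j = i}) := by
    ext j
    have := hlast j
    grind
  rw [hins, sum_insert (by simp), loadBefore_eq_sum_Iio, add_comm]

theorem exists_isLPT (v : Fin m → ℝ) (hfeas : ∀ j, ∃ i, ℓ j ≤ d i) :
    ∃ g : Fin n → Fin m, IsLPT ℓ v d g := by
  rcases isEmpty_or_nonempty (Fin n) with _ | ⟨⟨j₀⟩⟩
  · exact ⟨isEmptyElim, isEmptyElim⟩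
  have : Nonempty (Fin m) := ⟨(hfeas j₀).choose⟩
  refine exists_greedy_choice
    (P := fun k g b => ℓ k ≤ d b ∧ ∀ i, ℓ k ≤ d i →
      (loadBefore ℓ g k b + ℓ k) / v b ≤ (loadBefore ℓ g k i + ℓ k) / v i)
    (fun k g g' b h => ?_) fun k g => ?_
  · simp only [loadBefore_congr ℓ _ h, imp_self]
  · have hne : ({i | ℓ k ≤ d i} : Finset (Fin m)).Nonempty := by
      simpa [Finset.Nonempty] using hfeas k
    simpa using exists_min_image _ (fun i => (loadBefore ℓ g k i + ℓ k) / v i) hne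

theorem IsLPT.validSchedule (hg : IsLPT ℓ v d g) : ValidSchedule ℓ d g := fun j => (hg j).1

theorem sum_div_le_makespan (hm : 0 < m) (ℓ : Fin n → ℝ) (v : Fin m → ℝ) (g : Fin n → Fin m)
    (i : Fin m) : (∑ j with g j = i, ℓ j) / v i ≤ makespan hm ℓ v g :=
  le_sup' (fun i => (∑ j with g j = i, ℓ j) / v i) (mem_univ i)

theorem makespan_nonneg (hm : 0 < m) (hℓ : ∀ j, 0 ≤ ℓ j) (hv : ∀ i, 0 ≤ v i)
    (g : Fin n → Fin m) : 0 ≤ makespan hm ℓ v g :=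
  (div_nonneg (sum_nonneg fun j _ => hℓ j) (hv _)).trans (sum_div_le_makespan hm ℓ v g ⟨0, hm⟩)

theorem makespan_le_of_completion_le (hm : 0 < m) (hT : 0 ≤ T)
    (h : ∀ k, (loadBefore ℓ g k (g k) + ℓ k) / v (g k) ≤ T) : makespan hm ℓ v g ≤ T := by
  refine sup'_le _ _ fun i _ => ?_
  rcases ({j | g j = i} : Finset (Fin n)).eq_empty_or_nonempty with hempty | hne
  · simpa [hempty] using hT
  · obtain ⟨k, hk, hlast⟩ := exists_max_image _ id hne
    simp only [mem_filter, mem_univ, true_and, id] at hk hlast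
    rw [← loadBefore_add_eq_sum hk hlast, ← hk]
    exact h k

theorem sum_Iic_goldenWeight_le (hℓ : ∀ j, 0 ≤ ℓ j) (hv : 0 < v i)
    (hT : (∑ j with g j = i, ℓ j) / v i ≤ T) (k : Fin n) :
    ∑ j ∈ Iic k with g j = i, goldenWeight (ℓ j / ℓ k) ≤ goldenWeight (T * v i / ℓ k) := by
  have hload : ∑ j ∈ Iic k with g j = i, ℓ j ≤ T * v i :=
    (sum_le_sum_of_subset_of_nonneg (filter_subset_filter _ (subset_univ _))
      fun j _ _ => hℓ j).trans ((div_le_iff₀ hv).1 hT)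
  refine (sum_floorPair_le (sub_nonneg.2 Real.goldenRatio_lt_two.le)
    two_mul_two_sub_goldenRatio_le_one _ _).trans (floorPair_mono _ ?_)
  rw [← sum_div]
  exact div_le_div_of_nonneg_right hload (hℓ k)

theorem goldenWeight_le_sum_Iio (hsorted : Antitone ℓ) (hk : 0 < ℓ k) (hv : 0 < v i)
    (hlate : φ * T < (loadBefore ℓ g k i + ℓ k) / v i) :
    goldenWeight (T * v i / ℓ k) ≤ ∑ j ∈ Iio k with g j = i, goldenWeight (ℓ j / ℓ k) := by
  refine goldenWeight_le_sum (fun j hj => ?_) ?_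
  · exact (one_le_div hk).2 (hsorted (mem_Iio.1 (mem_filter.1 hj).1).le)
  · rw [lt_div_iff₀ hv, loadBefore_eq_sum_Iio] at hlate
    rwa [← sum_div, ← mul_div_assoc, ← mul_assoc, div_add_one hk.ne',
      div_lt_div_iff_of_pos_right hk]

theorem ValidSchedule.filter_Iic_eq_empty (hg : ValidSchedule ℓ d g) (hsorted : Antitone ℓ)
    (hi : d i < ℓ k) : {j ∈ Iic k | g j = i} = (∅ : Finset (Fin n)) := by
  refine filter_eq_empty_iff.2 fun j hj hji => hi.not_ge ?_
  exact hji ▸ (hsorted (mem_Iic.1 hj)).trans (hg j)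

theorem IsLPT.completion_le (hg : IsLPT ℓ v d g) (hℓ : ∀ j, 0 < ℓ j) (hv : ∀ i, 0 < v i)
    (hsorted : Antitone ℓ) (hg' : ValidSchedule ℓ d g')
    (hT : ∀ i, (∑ j with g' j = i, ℓ j) / v i ≤ T) (k : Fin n) :
    (loadBefore ℓ g k (g k) + ℓ k) / v (g k) ≤ φ * T := by
  by_contra! hlate
  have hone : ∀ j ≤ k, 1 ≤ ℓ j / ℓ k := fun j hj => (one_le_div (hℓ k)).2 (hsorted hj)
  have hdrone (i : Fin m) : ∑ j ∈ Iic k with g' j = i, goldenWeight (ℓ j / ℓ k) ≤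
      ∑ j ∈ Iio k with g j = i, goldenWeight (ℓ j / ℓ k) := by
    rcases le_or_gt (ℓ k) (d i) with hi | hi
    · exact (sum_Iic_goldenWeight_le (fun j => (hℓ j).le) (hv i) (hT i) k).trans
        (goldenWeight_le_sum_Iio hsorted (hℓ k) (hv i) (hlate.trans_le ((hg k).2 i hi)))
    · rw [hg'.filter_Iic_eq_empty hsorted hi, sum_empty]
      refine sum_nonneg fun j hj => zero_le_two.trans (two_le_goldenWeight (hone j ?_))
      exact (mem_Iio.1 (mem_filter.1 hj).1).le
  have htotal : ∑ j ∈ Iic k, goldenWeight (ℓ j / ℓ k) ≤ ∑ j ∈ Iio k, goldenWeight (ℓ j / ℓ k) := by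
    simpa only [sum_fiberwise] using sum_le_sum fun i (_ : i ∈ univ) => hdrone i
  rw [← Iio_insert, sum_insert (by simp)] at htotal
  linarith [two_le_goldenWeight (hone k le_rfl)]

theorem IsLPT.makespan_le (hm : 0 < m) (hg : IsLPT ℓ v d g) (hℓ : ∀ j, 0 < ℓ j)
    (hv : ∀ i, 0 < v i) (hsorted : Antitone ℓ) (hg' : ValidSchedule ℓ d g') :
    makespan hm ℓ v g ≤ φ * makespan hm ℓ v g' :=
  makespan_le_of_completion_le hm
    (mul_nonneg Real.goldenRatio_pos.le
      (makespan_nonneg hm (fun j => (hℓ j).le) (fun i => (hv i).le) g'))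
    (hg.completion_le hℓ hv hsorted hg' (sum_div_le_makespan hm ℓ v g'))

end Schedule

/-- **LPT is a φ-approximation for DWP.**  If some drone can deliver every
parcel, then the LPT heuristic produces a valid schedule (some run exists, and
every run is valid) whose makespan is at most `φ = (1+√5)/2` times the makespan
of any valid schedule, hence at most `φ` times the minimum makespan. -/
theorem lpt_dwp_phi_approx (n m : ℕ) (hm : 0 < m)
    (ℓ : Fin n → ℝ) (v d : Fin m → ℝ)
    (hℓ : ∀ j, 0 < ℓ j) (hv : ∀ i, 0 < v i) (hd : ∀ i, 0 < d i)
    (hsorted : ∀ j k : Fin n, j ≤ k → ℓ k ≤ ℓ j)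
    (hfeas : ∃ i : Fin m, ∀ j : Fin n, ℓ j ≤ d i) :
    (∃ g : Fin n → Fin m, IsLPT ℓ v d g) ∧
    ∀ g : Fin n → Fin m, IsLPT ℓ v d g →
      ValidSchedule ℓ d g ∧
      ∀ g' : Fin n → Fin m, ValidSchedule ℓ d g' →
        makespan hm ℓ v g ≤ (1 + Real.sqrt 5) / 2 * makespan hm ℓ v g' := by
  obtain ⟨i, hi⟩ := hfeas
  exact ⟨exists_isLPT v fun j => ⟨i, hi j⟩, fun g hg =>
    ⟨hg.validSchedule, fun g' hg' => hg.makespan_le hm hℓ hv (fun j k => hsorted j k) hg'⟩⟩
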